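/- arXiv:1907.01225 — 6 statements merged into one kernel-verified Lean document; each statement's English description precedes it below -/
import Mathlib

section
/- Let Λ : ℝ → ℝ be twice continuously differentiable with Λ'(δ) < 0 for all δ, lim_{δ→+∞} Λ(δ) = 0, and sup_{δ∈ℝ} Λ(δ)Λ''(δ)/(Λ'(δ))² < 2. Then for every p ∈ ℝ the function h_p : δ ↦ Λ(δ)(δ − p) admits a unique global maximizer δ̃*(p) on ℝ, and this maximizer is characterized by the first-order condition p = δ̃*(p) + Λ(δ̃*(p))/Λ'(δ̃*(p)). -/
/-- Hypotheses (H) on an intensity function `Λ`: twice continuously differentiable,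
decreasing with everywhere negative derivative, tending to `0` at `+∞`, and
`sup_δ Λ(δ)Λ''(δ)/(Λ'(δ))² < 2`. -/
def HypH (Λ : ℝ → ℝ) : Prop :=
  ContDiff ℝ 2 Λ ∧ StrictAnti Λ ∧ (∀ δ : ℝ, deriv Λ δ < 0) ∧
    Filter.Tendsto Λ Filter.atTop (nhds 0) ∧
    ∃ c : ℝ, c < 2 ∧ ∀ δ : ℝ, Λ δ * iteratedDeriv 2 Λ δ / (deriv Λ δ) ^ 2 ≤ c

/-!
The derivative of `δ ↦ Λ δ * (δ - p)` factors as `Λ' δ * (g δ - p)` with `g = id + Λ / Λ'`, and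
`g' = 2 - Λ Λ'' / Λ' ^ 2` is bounded below by a positive constant. Hence `g` is an increasing
bijection of `ℝ`, and since `Λ' < 0` the derivative changes sign exactly once, from positive to
negative, at the point where `g = p`.
-/

open Filter Set Function

/-- The virtual value `δ + Λ δ / Λ' δ`. The term comes from auction theory: for a demand curve
`Λ = 1 - F` with density `f = F'` it is Myerson's `δ - (1 - F δ) / f δ`. The first-order condition
for maximizing `δ ↦ Λ δ * (δ - p)` says that the virtual value equals the cost `p`. Where
`Λ' δ = 0` the value is `δ`. -/
noncomputable def virtualValue {𝕜 : Type*} [NontriviallyNormedField 𝕜] (Λ : 𝕜 → 𝕜) (δ : 𝕜) : 𝕜 :=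
  δ + Λ δ / deriv Λ δ

theorem bijective_of_pos_le_deriv {f : ℝ → ℝ} {ε : ℝ} (hε : 0 < ε)
    (hf' : ∀ x, ε ≤ deriv f x) : Bijective f := by
  have hpos : ∀ x, 0 < deriv f x := fun x => hε.trans_le (hf' x)
  have hf : Differentiable ℝ f := fun x => differentiableAt_of_deriv_ne_zero (hpos x).ne'
  have growth : ∀ ⦃x y⦄, x ≤ y → ε * (y - x) ≤ f y - f x :=
    mul_sub_le_image_sub_of_le_deriv hf hf'
  have le_of_nonneg : ∀ x, 0 ≤ x → ε * x + f 0 ≤ f x := fun x hx => by linarith [growth hx]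
  have le_of_nonpos : ∀ x, x ≤ 0 → f x ≤ ε * x + f 0 := fun x hx => by linarith [growth hx]
  have hatTop : Tendsto f atTop atTop :=
    tendsto_atTop_mono' atTop ((eventually_ge_atTop 0).mono le_of_nonneg)
      (tendsto_atTop_add_const_right _ (f 0) (tendsto_id.const_mul_atTop hε))
  have hatBot : Tendsto f atBot atBot :=
    tendsto_atBot_mono' atBot ((eventually_le_atBot 0).mono le_of_nonpos)
      (tendsto_atBot_add_const_right _ (f 0) (tendsto_id.const_mul_atBot hε))
  exact ⟨(strictMono_of_deriv_pos hpos).injective, hf.continuous.surjective hatTop hatBot⟩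

theorem isMaxOn_univ_iff_of_hasDerivAt_mul_sub {f g w : ℝ → ℝ} {p : ℝ}
    (hf : ∀ x, HasDerivAt f (w x * (g x - p)) x) (hw : ∀ x, w x < 0) (hg : Monotone g) {a : ℝ} :
    IsMaxOn f univ a ↔ g a = p := by
  have hdiff : Differentiable ℝ f := fun x => (hf x).differentiableAt
  constructor
  · intro hmax
    have hcrit : w a * (g a - p) = 0 := (hmax.isLocalMax univ_mem).hasDerivAt_eq_zero (hf a)
    exact sub_eq_zero.1 ((mul_eq_zero_iff_left (hw a).ne).1 hcrit)
  · rintro rfl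
    refine isMaxOn_univ_of_deriv hdiff.continuous.continuousAt hdiff.differentiableOn
      hdiff.differentiableOn (fun x hx => ?_) (fun x hx => ?_)
    · rw [(hf x).deriv]
      exact mul_nonneg_of_nonpos_of_nonpos (hw x).le (sub_nonpos.2 (hg (le_of_lt hx)))
    · rw [(hf x).deriv]
      exact mul_nonpos_of_nonpos_of_nonneg (hw x).le (sub_nonneg.2 (hg (le_of_lt hx)))

section NontriviallyNormedField

variable {𝕜 : Type*} [NontriviallyNormedField 𝕜] {Λ : 𝕜 → 𝕜} {δ : 𝕜}

theorem hasDerivAt_virtualValue (hΛ : deriv Λ δ ≠ 0) (hΛ' : DifferentiableAt 𝕜 (deriv Λ) δ) :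
    HasDerivAt (virtualValue Λ) (2 - Λ δ * deriv (deriv Λ) δ / deriv Λ δ ^ 2) δ := by
  have hquot := (differentiableAt_of_deriv_ne_zero hΛ).hasDerivAt.div hΛ'.hasDerivAt hΛ
  refine ((hasDerivAt_id δ).add hquot).congr_deriv ?_
  field_simp
  ring

theorem hasDerivAt_mul_sub_const (hΛ : deriv Λ δ ≠ 0) (p : 𝕜) :
    HasDerivAt (fun y => Λ y * (y - p)) (deriv Λ δ * (virtualValue Λ δ - p)) δ := by
  have hprod := (differentiableAt_of_deriv_ne_zero hΛ).hasDerivAt.mul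
    ((hasDerivAt_id δ).sub_const p)
  refine hprod.congr_deriv ?_
  simp only [virtualValue, id]
  field_simp
  ring

end NontriviallyNormedField

theorem unique_maximizer_and_first_order_condition_general
    {Λ : ℝ → ℝ} {c : ℝ} (hneg : ∀ δ, deriv Λ δ < 0) (hdiff : Differentiable ℝ (deriv Λ))
    (hc : c < 2) (hbound : ∀ δ, Λ δ * deriv (deriv Λ) δ / deriv Λ δ ^ 2 ≤ c) (p : ℝ) :
    (∃! δs : ℝ, ∀ δ : ℝ, Λ δ * (δ - p) ≤ Λ δs * (δs - p)) ∧
    (∀ δs : ℝ, (∀ δ : ℝ, Λ δ * (δ - p) ≤ Λ δs * (δs - p)) ↔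
      p = δs + Λ δs / deriv Λ δs) := by
  have hε : 0 < 2 - c := sub_pos.2 hc
  have hlb : ∀ δ, 2 - c ≤ deriv (virtualValue Λ) δ := fun δ => by
    rw [(hasDerivAt_virtualValue (hneg δ).ne (hdiff δ)).deriv]
    exact sub_le_sub_left (hbound δ) 2
  have hmono : Monotone (virtualValue Λ) :=
    (strictMono_of_deriv_pos fun δ => hε.trans_le (hlb δ)).monotone
  have foc : ∀ δs, (∀ δ, Λ δ * (δ - p) ≤ Λ δs * (δs - p)) ↔ virtualValue Λ δs = p := fun δs =>
    isMaxOn_univ_iff.symm.trans <| isMaxOn_univ_iff_of_hasDerivAt_mul_sub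
      (fun δ => hasDerivAt_mul_sub_const (hneg δ).ne p) hneg hmono
  simp only [foc]
  exact ⟨(bijective_of_pos_le_deriv hε hlb).existsUnique p, fun _ => eq_comm⟩

/-- For every `p`, the function `δ ↦ Λ(δ)(δ − p)` admits a unique global maximizer on `ℝ`,
characterized by the first-order condition `p = δ̃*(p) + Λ(δ̃*(p))/Λ'(δ̃*(p))`. -/
theorem unique_maximizer_and_first_order_condition
    (Λ : ℝ → ℝ) (hΛ : HypH Λ) (p : ℝ) :
    (∃! δs : ℝ, ∀ δ : ℝ, Λ δ * (δ - p) ≤ Λ δs * (δs - p)) ∧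
    (∀ δs : ℝ, (∀ δ : ℝ, Λ δ * (δ - p) ≤ Λ δs * (δs - p)) ↔
      p = δs + Λ δs / deriv Λ δs) := by
  obtain ⟨hsmooth, -, hneg, -, c, hc, hbound⟩ := hΛ
  exact unique_maximizer_and_first_order_condition_general hneg
    hsmooth.differentiable_deriv_two hc
    (by simpa only [iteratedDeriv_succ, iteratedDeriv_zero] using hbound) p
end

section
/- Let Λ : ℝ → ℝ satisfy hypotheses (H), and for each p ∈ ℝ let δ̃*(p) denote the unique global maximizer on ℝ of δ ↦ Λ(δ)(δ − p). Then the map p ↦ δ̃*(p) is continuously differentiable on ℝ, with derivative δ̃*'(p) = 1 / (2 − Λ(δ̃*(p))Λ''(δ̃*(p))/(Λ'(δ̃*(p)))²) > 0 for every p ∈ ℝ; in particular δ̃* is strictly increasing. -/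
/-!
The first-order condition `Λ'(δ)(δ - p) + Λ(δ) = 0` can be solved for `p`: it says
`p = δ + Λ(δ)/Λ'(δ)`. The derivative of the right-hand side in `δ` is `2 - Λ Λ''/Λ'²`, which is
positive, so `p ↦ δ̃*(p)`, being a right inverse of a strictly increasing function, is its two-sided
inverse, and the one-dimensional inverse function theorem applies.
-/

section RightInverse

variable {f g : ℝ → ℝ}

theorem strictMono_of_rightInverse_of_deriv_pos (hf' : ∀ x, 0 < deriv f x)
    (hg : Function.RightInverse g f) : StrictMono g :=
  ((strictMono_of_deriv_pos hf').orderIsoOfRightInverse f g hg).symm.strictMono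

theorem contDiff_of_rightInverse_of_deriv_pos {n : WithTop ℕ∞} (hf : ContDiff ℝ n f)
    (hf' : ∀ x, 0 < deriv f x) (hg : Function.RightInverse g f) : ContDiff ℝ n g :=
  ((strictMono_of_deriv_pos hf').orderIsoOfRightInverse f g hg).toHomeomorph.contDiff_symm_deriv
    (fun x => (hf' x).ne')
    (fun x => (differentiableAt_of_deriv_ne_zero (hf' x).ne').hasDerivAt) hf

theorem hasDerivAt_of_rightInverse_of_deriv_pos (hf' : ∀ x, 0 < deriv f x)
    (hg : Function.RightInverse g f) (y : ℝ) : HasDerivAt g (deriv f (g y))⁻¹ y := by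
  have hg_cont : Continuous g :=
    ((strictMono_of_deriv_pos hf').orderIsoOfRightInverse f g hg).symm.continuous
  have hf_deriv : HasDerivAt f (deriv f (g y)) (g y) :=
    (differentiableAt_of_deriv_ne_zero (hf' (g y)).ne').hasDerivAt
  exact hf_deriv.of_local_left_inverse hg_cont.continuousAt (hf' (g y)).ne'
    (Filter.Eventually.of_forall hg)

end RightInverse

section StationaryCost

variable {𝕜 : Type*} [NontriviallyNormedField 𝕜] {Λ : 𝕜 → 𝕜}

/-- The cost `p` for which the quote `δ` is a stationary point of `δ ↦ Λ(δ)(δ - p)`, obtained by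
solving the first-order condition for `p`. It is meaningful only where `Λ'(δ) ≠ 0`; elsewhere
division by zero makes it `δ`. -/
noncomputable def stationaryCost (Λ : 𝕜 → 𝕜) (δ : 𝕜) : 𝕜 :=
  δ + Λ δ / deriv Λ δ

theorem deriv_mul_sub_eq_zero_iff {p δ : 𝕜} (hΛ' : deriv Λ δ ≠ 0) :
    deriv (fun x => Λ x * (x - p)) δ = 0 ↔ stationaryCost Λ δ = p := by
  have h_deriv : HasDerivAt (fun x => Λ x * (x - p)) (deriv Λ δ * (δ - p) + Λ δ * 1) δ :=
    (differentiableAt_of_deriv_ne_zero hΛ').hasDerivAt.mul ((hasDerivAt_id δ).sub_const p)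
  have h_factor : deriv Λ δ * (δ - p) + Λ δ * 1 = deriv Λ δ * (stationaryCost Λ δ - p) := by
    rw [stationaryCost]
    field_simp
    ring
  rw [h_deriv.deriv, h_factor, mul_eq_zero_iff_left hΛ', sub_eq_zero]

theorem hasDerivAt_stationaryCost {δ : 𝕜} (hΛ' : deriv Λ δ ≠ 0)
    (hΛ'' : DifferentiableAt 𝕜 (deriv Λ) δ) :
    HasDerivAt (stationaryCost Λ) (2 - Λ δ * iteratedDeriv 2 Λ δ / (deriv Λ δ) ^ 2) δ := by
  have h_quot : HasDerivAt (fun x => Λ x / deriv Λ x)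
      ((deriv Λ δ * deriv Λ δ - Λ δ * deriv (deriv Λ) δ) / (deriv Λ δ) ^ 2) δ :=
    (differentiableAt_of_deriv_ne_zero hΛ').hasDerivAt.div hΛ''.hasDerivAt hΛ'
  refine ((hasDerivAt_id δ).add h_quot).congr_deriv ?_
  rw [iteratedDeriv_succ, iteratedDeriv_one]
  field_simp
  ring

theorem contDiff_stationaryCost {n : WithTop ℕ∞} (hΛ : ContDiff 𝕜 (n + 1) Λ)
    (hΛ' : ∀ δ, deriv Λ δ ≠ 0) : ContDiff 𝕜 n (stationaryCost Λ) :=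
  contDiff_id.add
    ((hΛ.of_le le_self_add).div (contDiff_succ_iff_deriv.1 hΛ).2.2 hΛ')

end StationaryCost

theorem maximizer_map_contDiff_strictMono_general {n : WithTop ℕ∞} (hn : n ≠ 0)
    {Λ : ℝ → ℝ} (hΛ : ContDiff ℝ (n + 1) Λ) (hΛ' : ∀ δ, deriv Λ δ ≠ 0)
    (hΛ'' : ∀ δ, Λ δ * iteratedDeriv 2 Λ δ / (deriv Λ δ) ^ 2 < 2) {δtil : ℝ → ℝ}
    (hδ : ∀ p, deriv (fun δ => Λ δ * (δ - p)) (δtil p) = 0) :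
    ContDiff ℝ n δtil ∧
    (∀ p : ℝ,
      deriv δtil p =
        1 / (2 - Λ (δtil p) * iteratedDeriv 2 Λ (δtil p) / (deriv Λ (δtil p)) ^ 2) ∧
      0 < deriv δtil p) ∧
    StrictMono δtil := by
  have hinv : Function.RightInverse δtil (stationaryCost Λ) := fun p =>
    (deriv_mul_sub_eq_zero_iff (hΛ' (δtil p))).1 (hδ p)
  have hderiv (δ : ℝ) : deriv (stationaryCost Λ) δ =
      2 - Λ δ * iteratedDeriv 2 Λ δ / (deriv Λ δ) ^ 2 :=
    (hasDerivAt_stationaryCost (hΛ' δ)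
      ((contDiff_succ_iff_deriv.1 hΛ).2.2.differentiable hn δ)).deriv
  have hpos (δ : ℝ) : 0 < deriv (stationaryCost Λ) δ := by
    rw [hderiv]
    exact sub_pos.2 (hΛ'' δ)
  refine ⟨contDiff_of_rightInverse_of_deriv_pos (contDiff_stationaryCost hΛ hΛ') hpos hinv,
    fun p => ?_, strictMono_of_rightInverse_of_deriv_pos hpos hinv⟩
  rw [(hasDerivAt_of_rightInverse_of_deriv_pos hpos hinv p).deriv, ← hderiv, one_div]
  exact ⟨rfl, inv_pos.2 (hpos _)⟩

/-- The map `p ↦ δ̃*(p)` (unique maximizer of `δ ↦ Λ(δ)(δ−p)`) is continuously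
differentiable with positive derivative
`δ̃*'(p) = 1 / (2 − Λ(δ̃*(p))Λ''(δ̃*(p))/(Λ'(δ̃*(p)))²)`; in particular it is strictly
increasing. -/
theorem maximizer_map_contDiff_strictMono
    (Λ : ℝ → ℝ) (hΛ : HypH Λ) (δtil : ℝ → ℝ)
    (hmax : ∀ p δ : ℝ, Λ δ * (δ - p) ≤ Λ (δtil p) * (δtil p - p))
    (huniq : ∀ p δs : ℝ, (∀ δ : ℝ, Λ δ * (δ - p) ≤ Λ δs * (δs - p)) → δs = δtil p) :
    ContDiff ℝ 1 δtil ∧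
    (∀ p : ℝ,
      deriv δtil p =
        1 / (2 - Λ (δtil p) * iteratedDeriv 2 Λ (δtil p) / (deriv Λ (δtil p)) ^ 2) ∧
      0 < deriv δtil p) ∧
    StrictMono δtil := by
  obtain ⟨hC2, -, hneg, -, c, hc, hbound⟩ := hΛ
  exact maximizer_map_contDiff_strictMono_general one_ne_zero (by rwa [one_add_one_eq_two])
    (fun δ => (hneg δ).ne) (fun δ => (hbound δ).trans_lt hc)
    fun p => IsLocalMax.deriv_eq_zero (Filter.Eventually.of_forall (hmax p))
end

section
/- Let Λ : ℝ → ℝ satisfy hypotheses (H), and define H̃(p) = sup_{δ∈ℝ} Λ(δ)(δ − p) for p ∈ ℝ. Then H̃ is continuously differentiable and strictly decreasing on ℝ, with H̃'(p) = −Λ(δ̃*(p)) < 0 for all p, where δ̃*(p) is the unique maximizer of δ ↦ Λ(δ)(δ − p); consequently δ̃*(p) = Λ⁻¹(−H̃'(p)). -/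
/-- The unconstrained Hamiltonian `H̃(p) = sup_{δ∈ℝ} Λ(δ)(δ − p)`. -/
noncomputable def Htil (Λ : ℝ → ℝ) (p : ℝ) : ℝ := ⨆ δ : ℝ, Λ δ * (δ - p)

/-!
`H̃` is a supremum of functions affine in `p`, and `-Λ (δ̃* p)` is a subgradient of it at `p`; a
function with a continuous selection of subgradients is continuously differentiable, with that
selection as its derivative. To see that `δ̃*` is continuous, compare the objectives at two values
of `p`: maximizers increase with `p`. As `Λ` is continuous, the pairs `(p, δ)` with `δ` a maximizer
at `p` form a closed set, which by uniqueness is the graph of `δ̃*`, and a monotone function with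
closed graph has no jumps.
-/

open Filter Set Topology

theorem continuous_of_monotone_of_isClosed_graph {α β : Type*} [LinearOrder α]
    [TopologicalSpace α] [OrderTopology α] [ConditionallyCompleteLinearOrder β]
    [TopologicalSpace β] [OrderTopology β] {f : α → β} (hf : Monotone f)
    (hgraph : IsClosed {z : α × β | z.2 = f z.1}) : Continuous f := by
  have eq_of_tendsto {x : α} {y : β} {s : Set α} [(𝓝[s] x).NeBot]
      (h : Tendsto f (𝓝[s] x) (𝓝 y)) : y = f x :=
    hgraph.mem_of_tendsto ((tendsto_id.mono_right nhdsWithin_le_nhds).prodMk_nhds h)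
      (Eventually.of_forall fun _ ↦ rfl)
  have leftLim_eq (x : α) : Function.leftLim f x = f x := by
    rcases eq_or_neBot (𝓝[<] x) with hbot | _
    · exact leftLim_eq_of_eq_bot f hbot
    · exact eq_of_tendsto (hf.tendsto_leftLim x)
  have rightLim_eq (x : α) : Function.rightLim f x = f x := by
    rcases eq_or_neBot (𝓝[>] x) with hbot | _
    · exact rightLim_eq_of_eq_bot f hbot
    · exact eq_of_tendsto (hf.tendsto_rightLim x)
  exact continuous_iff_continuousAt.2 fun x ↦
    hf.continuousAt_iff_leftLim_eq_rightLim.2 ((leftLim_eq x).trans (rightLim_eq x).symm)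

theorem hasFDerivAt_of_forall_add_le {E : Type*} [NormedAddCommGroup E] [NormedSpace ℝ E]
    {f : E → ℝ} {f' : E → E →L[ℝ] ℝ} {x : E} (hsub : ∀ y z, f y + f' y (z - y) ≤ f z)
    (hcont : ContinuousAt f' x) : HasFDerivAt f (f' x) x := by
  rw [hasFDerivAt_iff_isLittleO]
  refine Asymptotics.IsLittleO.of_bound fun ε hε ↦ ?_
  filter_upwards [Metric.continuousAt_iff'.1 hcont ε hε] with y hy
  have lower : 0 ≤ f y - f x - f' x (y - x) := by linarith [hsub x y]
  have upper : f y - f x - f' x (y - x) ≤ (f' y - f' x) (y - x) := by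
    have := hsub y x
    rw [← neg_sub y x, map_neg] at this
    rw [sub_apply]
    linarith
  calc ‖f y - f x - f' x (y - x)‖ = f y - f x - f' x (y - x) := Real.norm_of_nonneg lower
    _ ≤ (f' y - f' x) (y - x) := upper
    _ ≤ ‖(f' y - f' x) (y - x)‖ := Real.le_norm_self _
    _ ≤ ‖f' y - f' x‖ * ‖y - x‖ := (f' y - f' x).le_opNorm _
    _ ≤ ε * ‖y - x‖ := by
      rw [← dist_eq_norm (f' y)]
      gcongr

theorem hasDerivAt_of_forall_add_le {f f' : ℝ → ℝ} {x : ℝ}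
    (hsub : ∀ y z, f y + f' y * (z - y) ≤ f z) (hcont : ContinuousAt f' x) :
    HasDerivAt f (f' x) x :=
  hasFDerivAt_of_forall_add_le (f' := fun y ↦ ContinuousLinearMap.toSpanSingleton ℝ (f' y))
    (fun y z ↦ by simpa [mul_comm] using hsub y z)
    (ContinuousLinearMap.toSpanSingletonCLE.continuous.continuousAt.comp hcont)

/-- `δ` maximizes the expected profit rate `Λ δ * (δ - p)`: an optimal quote at the reference
level `p`, the relation of which `δ̃*` is the selection. It is spelled out as inequalities, so that
no supremum enters. -/
def IsOptimalQuote (Λ : ℝ → ℝ) (p δ : ℝ) : Prop :=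
  ∀ δ' : ℝ, Λ δ' * (δ' - p) ≤ Λ δ * (δ - p)

section IsOptimalQuote

variable {Λ : ℝ → ℝ} {p q δ ε : ℝ}

theorem isClosed_setOf_isOptimalQuote (hcont : Continuous Λ) :
    IsClosed {z : ℝ × ℝ | IsOptimalQuote Λ z.1 z.2} := by
  simp only [IsOptimalQuote, ofPred_forall]
  exact isClosed_iInter fun _ ↦ isClosed_le (by fun_prop) (by fun_prop)

theorem IsOptimalQuote.le_of_lt (hanti : StrictAnti Λ) (hδ : IsOptimalQuote Λ p δ)
    (hε : IsOptimalQuote Λ q ε) (hpq : p < q) : δ ≤ ε := by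
  have hmul : 0 ≤ (q - p) * (Λ δ - Λ ε) := by linarith [hδ ε, hε δ]
  exact hanti.le_iff_ge.1 (sub_nonneg.1 (nonneg_of_mul_nonneg_right hmul (sub_pos.2 hpq)))

theorem IsOptimalQuote.Htil_eq (hδ : IsOptimalQuote Λ p δ) : Htil Λ p = Λ δ * (δ - p) :=
  IsLUB.ciSup_eq (IsGreatest.isLUB ⟨⟨δ, rfl⟩, forall_mem_range.2 hδ⟩)

theorem IsOptimalQuote.Htil_add_le (hδ : IsOptimalQuote Λ p δ) (hε : IsOptimalQuote Λ q ε) :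
    Htil Λ p + -Λ δ * (q - p) ≤ Htil Λ q := by
  rw [hδ.Htil_eq, hε.Htil_eq]
  linarith [hε δ]

variable {δtil : ℝ → ℝ}

theorem continuous_of_forall_isOptimalQuote_iff (hcont : Continuous Λ) (hanti : StrictAnti Λ)
    (hopt : ∀ p δ, IsOptimalQuote Λ p δ ↔ δ = δtil p) : Continuous δtil := by
  have hmax (p : ℝ) : IsOptimalQuote Λ p (δtil p) := (hopt p _).2 rfl
  refine continuous_of_monotone_of_isClosed_graph
    (monotone_iff_forall_lt.2 fun p q ↦ (hmax p).le_of_lt hanti (hmax q)) ?_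
  simpa only [hopt] using isClosed_setOf_isOptimalQuote hcont

theorem hasDerivAt_Htil (hmax : ∀ p, IsOptimalQuote Λ p (δtil p))
    (hcont : ContinuousAt (fun q ↦ Λ (δtil q)) p) : HasDerivAt (Htil Λ) (-Λ (δtil p)) p :=
  hasDerivAt_of_forall_add_le (fun p q ↦ (hmax p).Htil_add_le (hmax q)) hcont.neg

end IsOptimalQuote

theorem Htil_contDiff_strictAnti_deriv_general
    (Λ : ℝ → ℝ) (hcont : Continuous Λ) (hanti : StrictAnti Λ) (hpos : ∀ δ : ℝ, 0 < Λ δ)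
    (δtil : ℝ → ℝ)
    (hmax : ∀ p δ : ℝ, Λ δ * (δ - p) ≤ Λ (δtil p) * (δtil p - p))
    (huniq : ∀ p δs : ℝ, (∀ δ : ℝ, Λ δ * (δ - p) ≤ Λ δs * (δs - p)) → δs = δtil p) :
    ContDiff ℝ 1 (Htil Λ) ∧ StrictAnti (Htil Λ) ∧
    ∀ p : ℝ,
      deriv (Htil Λ) p = -Λ (δtil p) ∧
      deriv (Htil Λ) p < 0 ∧
      δtil p = Function.invFun Λ (-(deriv (Htil Λ) p)) := by
  have hδcont : Continuous δtil := continuous_of_forall_isOptimalQuote_iff hcont hanti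
    fun p δ ↦ ⟨huniq p δ, fun h ↦ h ▸ hmax p⟩
  have hΛδcont : Continuous fun p ↦ Λ (δtil p) := hcont.comp hδcont
  have hderivAt (p : ℝ) : HasDerivAt (Htil Λ) (-Λ (δtil p)) p :=
    hasDerivAt_Htil hmax hΛδcont.continuousAt
  have hderiv : deriv (Htil Λ) = fun p ↦ -Λ (δtil p) := funext fun p ↦ (hderivAt p).deriv
  have hneg (p : ℝ) : deriv (Htil Λ) p < 0 := by
    simpa only [hderiv, neg_lt_zero] using hpos (δtil p)
  refine ⟨contDiff_one_iff_deriv.2 ⟨fun p ↦ (hderivAt p).differentiableAt, ?_⟩,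
    strictAnti_of_deriv_neg hneg, fun p ↦ ⟨(hderivAt p).deriv, hneg p, ?_⟩⟩
  · exact hderiv ▸ hΛδcont.neg
  · rw [hderiv, neg_neg, Function.leftInverse_invFun hanti.injective]

/-- `H̃` is continuously differentiable and strictly decreasing, with
`H̃'(p) = −Λ(δ̃*(p)) < 0`; consequently `δ̃*(p) = Λ⁻¹(−H̃'(p))`. -/
theorem Htil_contDiff_strictAnti_deriv
    (Λ : ℝ → ℝ) (hΛ : HypH Λ) (δtil : ℝ → ℝ)
    (hmax : ∀ p δ : ℝ, Λ δ * (δ - p) ≤ Λ (δtil p) * (δtil p - p))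
    (huniq : ∀ p δs : ℝ, (∀ δ : ℝ, Λ δ * (δ - p) ≤ Λ δs * (δs - p)) → δs = δtil p) :
    ContDiff ℝ 1 (Htil Λ) ∧ StrictAnti (Htil Λ) ∧
    ∀ p : ℝ,
      deriv (Htil Λ) p = -Λ (δtil p) ∧
      deriv (Htil Λ) p < 0 ∧
      δtil p = Function.invFun Λ (-(deriv (Htil Λ) p)) := by
  obtain ⟨hC, hanti, -, hlim, -⟩ := hΛ
  exact Htil_contDiff_strictAnti_deriv_general Λ hC.continuous hanti
    (fun δ ↦ (hanti.antitone.le_of_tendsto hlim (δ + 1)).trans_lt (hanti (lt_add_one δ)))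
    δtil hmax huniq
end

section
/- Let Λ : ℝ → ℝ satisfy hypotheses (H) and let δ∞ ≥ 0. Then the Hamiltonian H(p) = sup_{δ ≥ −δ∞} Λ(δ)(δ − p) is continuously differentiable and strictly decreasing on ℝ, with H'(p) = −Λ(δ*(p)) for all p ∈ ℝ, where δ*(p) is the unique maximizer of δ ↦ Λ(δ)(δ − p) over [−δ∞, +∞). In particular |H'(p)| ≤ Λ(−δ∞) for all p, so H is globally Lipschitz with Lipschitz constant Λ(−δ∞). -/
/-- The constrained Hamiltonian `H(p) = sup_{δ ≥ −δ∞} Λ(δ)(δ − p)`. -/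
noncomputable def Hcon (Λ : ℝ → ℝ) (δinf : ℝ) (p : ℝ) : ℝ :=
  ⨆ δ : {x : ℝ // -δinf ≤ x}, Λ (δ : ℝ) * ((δ : ℝ) - p)

/-!
For each fixed `δ` the objective is affine in `p` with slope `-Λ δ`, so the affine function that
touches `H` at `p` along the maximizer `δ*(p)` stays below `H`, and `-Λ (δ*(p))` is a subgradient
of `H` at `p`. A subgradient that depends continuously on the point is the derivative, so everything
rests on the continuity of `δ*`. Since `Λ` is decreasing, the objective has increasing differences
and `δ*` is monotone (Topkis). Hence `δ*` is locally confined to compact intervals, and there the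
uniqueness of the maximizer forces continuity (Berge).
-/

open Filter Topology Set

section UniqueMaxSelection

variable {X Y α : Type*}

/-- The maximizer map of a parametric problem: for every parameter `p`, the maximum of `f p` over
`s` is attained at `σ p` and nowhere else. It makes `δ*` precise, with `f p δ = Λ(δ)(δ − p)` and
`s = [−δ∞, +∞)`; `σ` is a total function, so existence of the maximizer is part of the notion. -/
structure IsUniqueMaxSelection [Preorder α] (f : X → Y → α) (s : Set Y) (σ : X → Y) : Prop where
  mem (p : X) : σ p ∈ s
  isMaxOn (p : X) : IsMaxOn (f p) s (σ p)
  eq_of_isMaxOn (p : X) (y : Y) (hy : y ∈ s) (hmax : IsMaxOn (f p) s y) : y = σ p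

namespace IsUniqueMaxSelection

variable {s : Set Y} {f : X → Y → α} {σ : X → Y}

theorem iSup_eq [ConditionallyCompleteLinearOrder α] (hσ : IsUniqueMaxSelection f s σ) (p : X) :
    ⨆ y : s, f p y = f p (σ p) :=
  (hσ.isMaxOn p).iSup_eq (hσ.mem p)

theorem monotone_of_monotone_sub [Preorder X] [LinearOrder Y] [AddCommGroup α] [PartialOrder α]
    [IsOrderedAddMonoid α] (hσ : IsUniqueMaxSelection f s σ)
    (hf : ∀ x ∈ s, ∀ y ∈ s, x ≤ y → Monotone fun p => f p y - f p x) : Monotone σ := by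
  intro p q hpq
  by_contra! hlt
  have hgain : f p (σ p) - f p (σ q) ≤ f q (σ p) - f q (σ q) :=
    hf _ (hσ.mem q) _ (hσ.mem p) hlt.le hpq
  have hle : f q (σ q) ≤ f q (σ p) :=
    sub_nonneg.1 <| (sub_nonneg.2 <| hσ.isMaxOn p (hσ.mem q)).trans hgain
  have hmax : IsMaxOn (f q) s (σ p) := fun y hy => (hσ.isMaxOn q hy).trans hle
  exact hlt.ne' (hσ.eq_of_isMaxOn q _ (hσ.mem p) hmax)

theorem continuousAt_of_eventually_mem_compact [TopologicalSpace X] [TopologicalSpace Y]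
    [Preorder α] [TopologicalSpace α] [OrderClosedTopology α] (hσ : IsUniqueMaxSelection f s σ)
    (hf : Continuous (Function.uncurry f)) (hs : IsClosed s) {K : Set Y} (hK : IsCompact K)
    {p : X} (hσK : ∀ᶠ q in 𝓝 p, σ q ∈ K) : ContinuousAt σ p := by
  refine hK.tendsto_nhds_of_unique_mapClusterPt hσK fun y _ hy => ?_
  obtain ⟨U, hUp, hUy⟩ := mapClusterPt_iff_ultrafilter.1 hy
  have hys : y ∈ s := hs.mem_of_tendsto hUy (.of_forall hσ.mem)
  refine hσ.eq_of_isMaxOn p y hys fun z hz => ?_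
  have hz_lim : Tendsto (fun q => f q z) U (𝓝 (f p z)) :=
    (hf.tendsto (p, z)).comp <| Tendsto.prodMk_nhds hUp tendsto_const_nhds
  have hσ_lim : Tendsto (fun q => f q (σ q)) U (𝓝 (f p y)) :=
    (hf.tendsto (p, y)).comp <| Tendsto.prodMk_nhds hUp hUy
  exact le_of_tendsto_of_tendsto' hz_lim hσ_lim fun q => hσ.isMaxOn q hz

theorem continuous_of_monotone [LinearOrder X] [TopologicalSpace X] [OrderTopology X]
    [NoMinOrder X] [NoMaxOrder X] [Preorder Y] [TopologicalSpace Y] [CompactIccSpace Y]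
    [Preorder α] [TopologicalSpace α] [OrderClosedTopology α] (hσ : IsUniqueMaxSelection f s σ)
    (hf : Continuous (Function.uncurry f)) (hs : IsClosed s) (hmono : Monotone σ) :
    Continuous σ := by
  refine continuous_iff_continuousAt.2 fun p => ?_
  obtain ⟨a, ha⟩ := exists_lt p
  obtain ⟨b, hb⟩ := exists_gt p
  refine hσ.continuousAt_of_eventually_mem_compact hf hs (isCompact_Icc (a := σ a) (b := σ b)) ?_
  filter_upwards [Icc_mem_nhds ha hb] with q hq
  exact ⟨hmono hq.1, hmono hq.2⟩

end IsUniqueMaxSelection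

end UniqueMaxSelection

theorem hasFDerivAt_of_subgradient {E : Type*} [NormedAddCommGroup E] [NormedSpace ℝ E]
    {f : E → ℝ} {g : E → E →L[ℝ] ℝ} {x : E} (hfg : ∀ y z, f y + g y (z - y) ≤ f z)
    (hg : ContinuousAt g x) : HasFDerivAt f (g x) x := by
  rw [hasFDerivAt_iff_isLittleO, Asymptotics.isLittleO_iff]
  intro ε hε
  filter_upwards [Metric.continuousAt_iff'.1 hg ε hε] with y hy
  have hlower : 0 ≤ f y - f x - g x (y - x) := by linarith [hfg x y]
  have hupper : f y - f x - g x (y - x) ≤ (g y - g x) (y - x) := by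
    have hyx := hfg y x
    rw [← neg_sub y x, map_neg] at hyx
    rw [sub_apply]
    linarith
  calc ‖f y - f x - g x (y - x)‖
      = f y - f x - g x (y - x) := Real.norm_of_nonneg hlower
    _ ≤ ‖(g y - g x) (y - x)‖ := hupper.trans (Real.le_norm_self _)
    _ ≤ ‖g y - g x‖ * ‖y - x‖ := (g y - g x).le_opNorm _
    _ ≤ ε * ‖y - x‖ := by
      rw [dist_eq_norm] at hy
      gcongr

theorem hasDerivAt_of_subgradient {f g : ℝ → ℝ} {x : ℝ}
    (hfg : ∀ y z, f y + g y * (z - y) ≤ f z) (hg : ContinuousAt g x) :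
    HasDerivAt f (g x) x := by
  refine hasFDerivAt_of_subgradient (g := fun y => .toSpanSingleton ℝ (g y)) (fun y z => ?_) ?_
  · simpa [mul_comm] using hfg y z
  · exact ContinuousLinearMap.toSpanSingletonCLE.continuous.continuousAt.comp hg

theorem lt_of_strictAnti_of_tendsto_atTop {α β : Type*} [PartialOrder α] [IsDirectedOrder α]
    [NoMaxOrder α] [Preorder β] [TopologicalSpace β] [OrderClosedTopology β] {f : α → β} {b : β}
    (hf : StrictAnti f) (hlim : Tendsto f atTop (𝓝 b)) (x : α) : b < f x := by
  obtain ⟨y, hxy⟩ := exists_gt x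
  exact (hf.antitone.le_of_tendsto hlim y).trans_lt (hf hxy)

section Hamiltonian

variable {Λ δstar : ℝ → ℝ} {δinf : ℝ}

theorem Hcon_eq (hδ : IsUniqueMaxSelection (fun p δ => Λ δ * (δ - p)) (Ici (-δinf)) δstar)
    (p : ℝ) : Hcon Λ δinf p = Λ (δstar p) * (δstar p - p) :=
  hδ.iSup_eq p

theorem Hcon_add_neg_mul_sub_le
    (hδ : IsUniqueMaxSelection (fun p δ => Λ δ * (δ - p)) (Ici (-δinf)) δstar) (p q : ℝ) :
    Hcon Λ δinf p + -Λ (δstar p) * (q - p) ≤ Hcon Λ δinf q :=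
  calc Hcon Λ δinf p + -Λ (δstar p) * (q - p)
      = Λ (δstar p) * (δstar p - q) := by rw [Hcon_eq hδ]; ring
    _ ≤ Λ (δstar q) * (δstar q - q) := hδ.isMaxOn q (hδ.mem p)
    _ = Hcon Λ δinf q := (Hcon_eq hδ q).symm

theorem monotone_mul_sub_sub (hΛ : Antitone Λ) {x y : ℝ} (hxy : x ≤ y) :
    Monotone fun p => Λ y * (y - p) - Λ x * (x - p) := by
  intro p q hpq
  have hprod : 0 ≤ (Λ x - Λ y) * (q - p) :=
    mul_nonneg (sub_nonneg.2 (hΛ hxy)) (sub_nonneg.2 hpq)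
  linarith

theorem continuous_maximizer (hcont : Continuous Λ) (hanti : Antitone Λ)
    (hδ : IsUniqueMaxSelection (fun p δ => Λ δ * (δ - p)) (Ici (-δinf)) δstar) :
    Continuous δstar :=
  hδ.continuous_of_monotone (by fun_prop) isClosed_Ici <|
    hδ.monotone_of_monotone_sub fun _ _ _ _ => monotone_mul_sub_sub hanti

theorem hasDerivAt_Hcon (hcont : Continuous Λ) (hanti : Antitone Λ)
    (hδ : IsUniqueMaxSelection (fun p δ => Λ δ * (δ - p)) (Ici (-δinf)) δstar) (p : ℝ) :
    HasDerivAt (Hcon Λ δinf) (-Λ (δstar p)) p :=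
  hasDerivAt_of_subgradient (Hcon_add_neg_mul_sub_le hδ)
    (hcont.comp (continuous_maximizer hcont hanti hδ)).neg.continuousAt

theorem Hcon_contDiff_strictAnti_lipschitz_general (hcont : Continuous Λ) (hanti : Antitone Λ)
    (hpos : ∀ δ, 0 < Λ δ)
    (hδ : IsUniqueMaxSelection (fun p δ => Λ δ * (δ - p)) (Ici (-δinf)) δstar) :
    ContDiff ℝ 1 (Hcon Λ δinf) ∧ StrictAnti (Hcon Λ δinf) ∧
    (∀ p : ℝ, deriv (Hcon Λ δinf) p = -Λ (δstar p)) ∧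
    (∀ p : ℝ, |deriv (Hcon Λ δinf) p| ≤ Λ (-δinf)) ∧
    LipschitzWith (Real.toNNReal (Λ (-δinf))) (Hcon Λ δinf) := by
  have hderivAt := hasDerivAt_Hcon hcont hanti hδ
  have hdiff : Differentiable ℝ (Hcon Λ δinf) := fun p => (hderivAt p).differentiableAt
  have hderiv (p : ℝ) : deriv (Hcon Λ δinf) p = -Λ (δstar p) := (hderivAt p).deriv
  have hbound (p : ℝ) : |deriv (Hcon Λ δinf) p| ≤ Λ (-δinf) := by
    rw [hderiv, abs_neg, abs_of_pos (hpos _)]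
    exact hanti (hδ.mem p)
  refine ⟨contDiff_one_iff_deriv.2 ⟨hdiff, ?_⟩, strictAnti_of_deriv_neg fun p => ?_, hderiv,
    hbound, lipschitzWith_of_nnnorm_deriv_le hdiff fun p => NNReal.le_toNNReal_of_coe_le (hbound p)⟩
  · rw [funext hderiv]
    exact (hcont.comp (continuous_maximizer hcont hanti hδ)).neg
  · rw [hderiv]
    exact neg_neg_of_pos (hpos _)

end Hamiltonian

/-- `H` is continuously differentiable and strictly decreasing with
`H'(p) = −Λ(δ*(p))`, where `δ*(p)` is the unique maximizer over `[−δ∞, +∞)`;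
in particular `|H'(p)| ≤ Λ(−δ∞)` and `H` is globally Lipschitz with constant `Λ(−δ∞)`. -/
theorem Hcon_contDiff_strictAnti_lipschitz
    (Λ : ℝ → ℝ) (hΛ : HypH Λ) (δinf : ℝ) (hδinf : 0 ≤ δinf) (δstar : ℝ → ℝ)
    (hmem : ∀ p : ℝ, -δinf ≤ δstar p)
    (hmax : ∀ p δ : ℝ, -δinf ≤ δ → Λ δ * (δ - p) ≤ Λ (δstar p) * (δstar p - p))
    (huniq : ∀ p δs : ℝ, -δinf ≤ δs →
      (∀ δ : ℝ, -δinf ≤ δ → Λ δ * (δ - p) ≤ Λ δs * (δs - p)) → δs = δstar p) :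
    ContDiff ℝ 1 (Hcon Λ δinf) ∧ StrictAnti (Hcon Λ δinf) ∧
    (∀ p : ℝ, deriv (Hcon Λ δinf) p = -Λ (δstar p)) ∧
    (∀ p : ℝ, |deriv (Hcon Λ δinf) p| ≤ Λ (-δinf)) ∧
    LipschitzWith (Real.toNNReal (Λ (-δinf))) (Hcon Λ δinf) := by
  obtain ⟨hC2, hanti, -, hlim, -⟩ := hΛ
  exact Hcon_contDiff_strictAnti_lipschitz_general hC2.continuous hanti.antitone
    (lt_of_strictAnti_of_tendsto_atTop hanti hlim) ⟨hmem, hmax, huniq⟩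
end

section
/- Let Λ : ℝ → ℝ satisfy hypotheses (H) and let δ∞ ≥ 0. Let p₀ ∈ ℝ be the unique point such that δ̃*(p₀) = −δ∞, where δ̃* is the (strictly increasing) map sending p to the unique unconstrained maximizer of δ ↦ Λ(δ)(δ − p). Then the constrained Hamiltonian H(p) = sup_{δ ≥ −δ∞} Λ(δ)(δ − p) satisfies: H is affine on (−∞, p₀] with H(p) = Λ(−δ∞)(−δ∞ − p) there (slope −Λ(−δ∞)), and H(p) = sup_{δ∈ℝ} Λ(δ)(δ − p) for p ≥ p₀. -/
/-!
Write `h_p(δ) = Λ(δ)(δ − p) = h_{p₀}(δ) + Λ(δ)(p₀ − p)`. Since `Λ` is decreasing, the correction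
`Λ(δ)(p₀ − p)` is decreasing in `δ` for `p ≤ p₀` and increasing for `p ≥ p₀`. So if `a = −δ∞`
maximizes `h_{p₀}`, it still maximizes `h_p` over `δ ≥ a` in the first case and over `δ ≤ a` in the
second. In the first case the constrained supremum is thus `h_p(a)`; in the second, competitors
below `a` do not increase the supremum.
-/

open Set

theorem iSup_Ici_eq_iSup_of_isMaxOn_Iic {α β : Type*} [LinearOrder α]
    [ConditionallyCompleteLinearOrder β] {f : α → β} {a : α} (hf : IsMaxOn f (Iic a) a) :
    ⨆ x : Ici a, f x = ⨆ x, f x := by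
  apply csSup_eq_csSup_of_forall_exists_le
  · rintro _ ⟨x, rfl⟩
    exact ⟨f x, mem_range_self _, le_rfl⟩
  · rintro _ ⟨x, rfl⟩
    rcases le_total a x with hax | hxa
    · exact ⟨f x, ⟨⟨x, hax⟩, rfl⟩, le_rfl⟩
    · exact ⟨f a, ⟨⟨a, self_mem_Ici⟩, rfl⟩, hf hxa⟩

section Objective

variable {R : Type*} [Ring R]

theorem mul_sub_eq_mul_sub_add_mul_sub (c x p₀ p : R) :
    c * (x - p) = c * (x - p₀) + c * (p₀ - p) := by
  rw [← mul_add, sub_add_sub_cancel]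

theorem isMaxOn_mul_sub_of_isMaxOn_mul_const [PartialOrder R] [IsOrderedRing R] {Λ : R → R}
    {s : Set R} {a p₀ p : R} (hmax : IsMaxOn (fun δ ↦ Λ δ * (δ - p₀)) s a)
    (hcorrection : IsMaxOn (fun δ ↦ Λ δ * (p₀ - p)) s a) :
    IsMaxOn (fun δ ↦ Λ δ * (δ - p)) s a := by
  simpa only [← mul_sub_eq_mul_sub_add_mul_sub] using hmax.add hcorrection

theorem isMaxOn_Ici_mul_sub_of_le [PartialOrder R] [IsOrderedRing R] {Λ : R → R} {a p₀ p : R}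
    (hΛ : AntitoneOn Λ (Ici a)) (hmax : IsMaxOn (fun δ ↦ Λ δ * (δ - p₀)) (Ici a) a)
    (hp : p ≤ p₀) : IsMaxOn (fun δ ↦ Λ δ * (δ - p)) (Ici a) a :=
  isMaxOn_mul_sub_of_isMaxOn_mul_const hmax fun _ hδ ↦
    mul_le_mul_of_nonneg_right (hΛ self_mem_Ici hδ hδ) (sub_nonneg.2 hp)

theorem isMaxOn_Iic_mul_sub_of_ge [PartialOrder R] [IsOrderedRing R] {Λ : R → R} {a p₀ p : R}
    (hΛ : AntitoneOn Λ (Iic a)) (hmax : IsMaxOn (fun δ ↦ Λ δ * (δ - p₀)) (Iic a) a)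
    (hp : p ≥ p₀) : IsMaxOn (fun δ ↦ Λ δ * (δ - p)) (Iic a) a :=
  isMaxOn_mul_sub_of_isMaxOn_mul_const hmax fun _ hδ ↦
    mul_le_mul_of_nonpos_right (hΛ hδ self_mem_Iic hδ) (sub_nonpos.2 hp)

theorem bddAbove_range_mul_sub_of_ge [LinearOrder R] [IsOrderedRing R] {Λ : R → R} {p₀ p : R}
    (hΛ : Antitone Λ) (hbdd : BddAbove (range fun δ ↦ Λ δ * (δ - p₀))) (hp : p ≥ p₀) :
    BddAbove (range fun δ ↦ Λ δ * (δ - p)) := by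
  obtain ⟨M, hM⟩ := hbdd
  refine ⟨max (M + Λ p * (p₀ - p)) (max M 0), ?_⟩
  rintro _ ⟨δ, rfl⟩
  have hδM : Λ δ * (δ - p₀) ≤ M := hM (mem_range_self δ)
  rcases le_total δ p with hδp | hpδ
  · apply le_max_of_le_left
    calc Λ δ * (δ - p) = Λ δ * (δ - p₀) + Λ δ * (p₀ - p) :=
          mul_sub_eq_mul_sub_add_mul_sub ..
      _ ≤ M + Λ p * (p₀ - p) :=
          add_le_add hδM (mul_le_mul_of_nonpos_right (hΛ hδp) (sub_nonpos.2 hp))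
  · apply le_max_of_le_right
    rcases le_total 0 (Λ δ) with hpos | hneg
    · exact le_max_of_le_left
        ((mul_le_mul_of_nonneg_left (sub_le_sub_left hp δ) hpos).trans hδM)
    · exact le_max_of_le_right (mul_nonpos_of_nonpos_of_nonneg hneg (sub_nonneg.2 hpδ))

end Objective

/-- Boundedness is part of the conclusion because a real `⨆` over an unbounded family is `0`. -/
theorem Hcon_affine_below_and_unconstrained_above_general {Λ : ℝ → ℝ} (hΛ : Antitone Λ)
    {δinf p₀ : ℝ} (hp₀ : IsMaxOn (fun δ ↦ Λ δ * (δ - p₀)) univ (-δinf)) :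
    (∀ p ≤ p₀, Hcon Λ δinf p = Λ (-δinf) * (-δinf - p)) ∧
    (∀ p ≥ p₀, BddAbove (range fun δ ↦ Λ δ * (δ - p)) ∧
      Hcon Λ δinf p = ⨆ δ : ℝ, Λ δ * (δ - p)) := by
  refine ⟨fun p hp ↦ ?_, fun p hp ↦ ⟨?_, ?_⟩⟩
  · have hmax := isMaxOn_Ici_mul_sub_of_le (hΛ.antitoneOn _) (hp₀.on_subset (subset_univ _)) hp
    exact hmax.iSup_eq self_mem_Ici
  · exact bddAbove_range_mul_sub_of_ge hΛ (image_univ ▸ hp₀.bddAbove) hp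
  · have hmax := isMaxOn_Iic_mul_sub_of_ge (hΛ.antitoneOn _) (hp₀.on_subset (subset_univ _)) hp
    exact iSup_Ici_eq_iSup_of_isMaxOn_Iic hmax

/-- If `p₀` is the point where the unconstrained maximizer `δ̃*` hits the bound `−δ∞`,
then `H` is affine with slope `−Λ(−δ∞)` on `(−∞, p₀]`, namely
`H(p) = Λ(−δ∞)(−δ∞ − p)` there, and `H` coincides with the unconstrained Hamiltonian
`sup_{δ∈ℝ} Λ(δ)(δ − p)` for `p ≥ p₀`. -/
theorem Hcon_affine_below_and_unconstrained_above
    (Λ : ℝ → ℝ) (hΛ : HypH Λ) (δinf : ℝ) (hδinf : 0 ≤ δinf) (δtil : ℝ → ℝ)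
    (hmax : ∀ p δ : ℝ, Λ δ * (δ - p) ≤ Λ (δtil p) * (δtil p - p))
    (huniq : ∀ p δs : ℝ, (∀ δ : ℝ, Λ δ * (δ - p) ≤ Λ δs * (δs - p)) → δs = δtil p)
    (p₀ : ℝ) (hp₀ : δtil p₀ = -δinf) :
    (∀ p : ℝ, p ≤ p₀ → Hcon Λ δinf p = Λ (-δinf) * (-δinf - p)) ∧
    (∀ p : ℝ, p₀ ≤ p → Hcon Λ δinf p = ⨆ δ : ℝ, Λ δ * (δ - p)) :=
  (Hcon_affine_below_and_unconstrained_above_general hΛ.2.1.antitone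
    fun δ _ ↦ hp₀ ▸ hmax p₀ δ).imp_right fun h p hp ↦ (h p hp).2
end

section
/- Let d ≥ 1, and for i = 1,…,d let H^{i,b}, H^{i,a} : ℝ → ℝ be globally Lipschitz continuous functions (with Lipschitz constants L^{i,b}, L^{i,a}), and let μ^{i,b}, μ^{i,a} be probability measures on (0,+∞). Let π : ℝᵈ → ℝ₊ be continuous and suppose there exist p ∈ ℕ* and C > 0 such that: π(q) ≤ C(1+‖q‖ᵖ) for all q; (1+π(q+y))/(1+π(q)) ≤ C(1+‖y‖ᵖ) for all q, y ∈ ℝᵈ; and ∫₀^∞ zᵖ μ^{i,b}(dz) + ∫₀^∞ zᵖ μ^{i,a}(dz) < +∞ for every i. Let ψ ∈ C_π. Then for every u ∈ C_π, the function F(u) : q ↦ ψ(q) − Σᵢ ∫₀^∞ z H^{i,b}((u(q) − u(q+z eⁱ))/z) μ^{i,b}(dz) − Σᵢ ∫₀^∞ z H^{i,a}((u(q) − u(q−z eⁱ))/z) μ^{i,a}(dz) is well defined (the integrals converge), continuous on ℝᵈ, and satisfies sup_{q∈ℝᵈ} |F(u)(q)|/(1+π(q)) < +∞; i.e. F(u)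 ∈ C_π. -/
open MeasureTheory

/-- Membership in the weighted space `C_π`. -/
def InCpi {d : ℕ} (π : EuclideanSpace ℝ (Fin d) → ℝ)
    (u : EuclideanSpace ℝ (Fin d) → ℝ) : Prop :=
  Continuous u ∧ ∃ M : ℝ, ∀ q, |u q| ≤ M * (1 + π q)

/-- The operator `F` of the integro-differential Hamilton–Jacobi equation:
`F(u)(q) = ψ(q) − Σᵢ ∫ z H^{i,b}((u(q) − u(q+z eⁱ))/z) μ^{i,b}(dz)
               − Σᵢ ∫ z H^{i,a}((u(q) − u(q−z eⁱ))/z) μ^{i,a}(dz)`. -/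
noncomputable def Fop (d : ℕ) (ψ : EuclideanSpace ℝ (Fin d) → ℝ)
    (Hb Ha : Fin d → ℝ → ℝ) (μb μa : Fin d → Measure ℝ)
    (u : EuclideanSpace ℝ (Fin d) → ℝ) (q : EuclideanSpace ℝ (Fin d)) : ℝ :=
  ψ q
    - ∑ i : Fin d,
        ∫ z : ℝ, z * Hb i ((u q - u (q + z • EuclideanSpace.single i (1 : ℝ))) / z) ∂(μb i)
    - ∑ i : Fin d,
        ∫ z : ℝ, z * Ha i ((u q - u (q - z • EuclideanSpace.single i (1 : ℝ))) / z) ∂(μa i)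

/-!
The factor `z` in `z * H ((u q - u (q + z • e)) / z)` cancels the denominator: if `H` grows at most
linearly, the integrand is bounded by a multiple of `|z| + |u q - u (q + z • e)|`. Writing
`w = 1 + π`, the bounds `u = O(w)` and `w (q + y) ≤ v y * w q` turn this into a multiple of
`w q * (1 + |z| + v (z • e))`, a product of a function of `q` and an integrable function of `z`. As
`v` is bounded near `0`, the inequality `w q ≤ v (q - q₀) * w q₀` also makes `w` locally bounded, so
dominated convergence gives continuity in `q`.
-/

section ProductDomination

open Asymptotics Filter Topology

variable {X Z G : Type*} [MeasurableSpace Z] {μ : Measure Z} [NormedAddCommGroup G]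
  {F : X → Z → G} {w : X → ℝ} {g : Z → ℝ}

theorem integrable_of_isBigO_mul (hF : (fun x : X × Z => F x.1 x.2) =O[⊤] fun x => w x.1 * g x.2)
    (hg : Integrable g μ) {q : X} (hFq : AEStronglyMeasurable (F q) μ) : Integrable (F q) μ :=
  IsBigO.integrable hFq (hF.comp_tendsto (k := fun z => (q, z)) tendsto_top) (hg.const_mul (w q))

variable [NormedSpace ℝ G]

theorem isBigO_integral_of_isBigO_mul
    (hF : (fun x : X × Z => F x.1 x.2) =O[⊤] fun x => w x.1 * g x.2) (hg : Integrable g μ) :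
    (fun q => ∫ z, F q z ∂μ) =O[⊤] w := by
  obtain ⟨K, hK⟩ := isBigO_top.1 hF
  refine isBigO_top.2 ⟨K * ∫ z, ‖g z‖ ∂μ, fun q => ?_⟩
  calc ‖∫ z, F q z ∂μ‖
      ≤ ∫ z, K * ‖w q‖ * ‖g z‖ ∂μ :=
        norm_integral_le_of_norm_le (hg.norm.const_mul _) <| .of_forall fun z => by
          simpa only [norm_mul, mul_assoc] using hK (q, z)
    _ = K * (∫ z, ‖g z‖ ∂μ) * ‖w q‖ := by rw [integral_const_mul]; ring

theorem continuous_integral_of_isBigO_mul [TopologicalSpace X] [FirstCountableTopology X]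
    (hF : (fun x : X × Z => F x.1 x.2) =O[⊤] fun x => w x.1 * g x.2) (hg : Integrable g μ)
    (hw : ∀ q, w =O[𝓝 q] (fun _ => 1 : X → ℝ)) (hFm : ∀ q, AEStronglyMeasurable (F q) μ)
    (hFc : ∀ z, Continuous fun q => F q z) : Continuous fun q => ∫ z, F q z ∂μ := by
  obtain ⟨K, hK0, hK⟩ := hF.exists_nonneg
  have hFK : ∀ q z, ‖F q z‖ ≤ K * (‖w q‖ * ‖g z‖) := fun q z => by
    simpa only [norm_mul] using isBigOWith_top.1 hK (q, z)
  refine continuous_iff_continuousAt.2 fun q₀ => ?_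
  obtain ⟨B, hB⟩ := (hw q₀).bound
  refine continuousAt_of_dominated (bound := fun z => K * (B * ‖g z‖)) (.of_forall hFm) ?_
    ((hg.norm.const_mul B).const_mul K) (.of_forall fun z => (hFc z).continuousAt)
  filter_upwards [hB] with q hq
  have hwB : ‖w q‖ ≤ B := by simpa using hq
  exact .of_forall fun z => (hFK q z).trans (by gcongr)

end ProductDomination

section JumpIntegral

open Asymptotics Filter Topology

theorem isBigO_mul_comp_div {H : ℝ → ℝ} (hH : H =O[⊤] fun x => 1 + |x|) :
    (fun x : ℝ × ℝ => x.1 * H (x.2 / x.1)) =O[⊤] fun x => |x.1| + |x.2| := by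
  obtain ⟨A, hA0, hA⟩ := hH.exists_nonneg
  refine isBigO_top.2 ⟨A, fun ⟨z, x⟩ => ?_⟩
  have hHx : |H (x / z)| ≤ A * (1 + |x / z|) := by
    simpa [abs_of_nonneg (add_nonneg zero_le_one (abs_nonneg (x / z)))]
      using isBigOWith_top.1 hA (x / z)
  have hcancel : |z| * |x / z| ≤ |x| := by
    rw [abs_div, mul_div_left_comm]
    exact mul_le_of_le_one_right (abs_nonneg x) (div_self_le_one |z|)
  calc ‖z * H (x / z)‖ = |z| * |H (x / z)| := abs_mul _ _
    _ ≤ |z| * (A * (1 + |x / z|)) := by gcongr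
    _ = A * (|z| + |z| * |x / z|) := by ring
    _ ≤ A * (|z| + |x|) := by gcongr
    _ ≤ A * ‖|z| + |x|‖ := by gcongr; exact Real.le_norm_self _

theorem isBigO_one_add_abs_of_lipschitzWith {H : ℝ → ℝ} {L : NNReal} (hH : LipschitzWith L H) :
    H =O[⊤] fun x => 1 + |x| := by
  refine isBigO_top.2 ⟨|H 0| + L, fun x => ?_⟩
  have hL : |H x - H 0| ≤ L * |x| := by simpa [Real.dist_eq] using hH.dist_le_mul x 0
  calc ‖H x‖ ≤ |H 0| + |H x - H 0| := by
        simpa using abs_add_le (H 0) (H x - H 0)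
    _ ≤ |H 0| + L * |x| := by gcongr
    _ ≤ (|H 0| + L) * (1 + |x|) := by
        have : 0 ≤ |H 0| * |x| + L := by positivity
        linarith
    _ ≤ (|H 0| + L) * ‖1 + |x|‖ := by gcongr; exact Real.le_norm_self _

variable {E : Type*} [SeminormedAddCommGroup E] {w v : E → ℝ}

theorem isBigO_one_nhds_of_moderate (hw0 : ∀ q, 0 ≤ w q) (hwv : ∀ q y, w (q + y) ≤ v y * w q)
    (hv : v =O[𝓝 0] (fun _ => 1 : E → ℝ)) (q₀ : E) : w =O[𝓝 q₀] (fun _ => 1 : E → ℝ) := by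
  have hsub : Tendsto (fun q => q - q₀) (𝓝 q₀) (𝓝 0) := tendsto_sub_nhds_zero_iff.2 tendsto_id
  have hle : w =O[𝓝 q₀] fun q => w q₀ * v (q - q₀) := isBigO_of_le _ fun q => by
    rw [Real.norm_of_nonneg (hw0 q)]
    have hq : w q ≤ w q₀ * v (q - q₀) := by simpa [mul_comm] using hwv q₀ (q - q₀)
    exact hq.trans (Real.le_norm_self _)
  exact hle.trans ((hv.comp_tendsto hsub).const_mul_left _)

variable [NormedSpace ℝ E]

/-- The integrand of the nonlocal terms of `Fop` for jumps in the direction `e`: `e = eⁱ` on the bid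
side and `e = -eⁱ` on the ask side. It vanishes at `z = 0`, which is also its limit as `z → 0` when
`u` is continuous and `H` grows at most linearly. -/
noncomputable def jumpIntegrand (H : ℝ → ℝ) (u : E → ℝ) (e q : E) (z : ℝ) : ℝ :=
  z * H ((u q - u (q + z • e)) / z)

theorem jumpIntegrand_neg (H : ℝ → ℝ) (u : E → ℝ) (e q : E) :
    jumpIntegrand H u (-e) q = fun z => z * H ((u q - u (q - z • e)) / z) := by
  funext z
  rw [jumpIntegrand, smul_neg, ← sub_eq_add_neg]

variable {H : ℝ → ℝ} {u : E → ℝ}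

theorem continuous_jumpIntegrand (hHc : Continuous H) (huc : Continuous u) (e : E) (z : ℝ) :
    Continuous fun q => jumpIntegrand H u e q z := by
  unfold jumpIntegrand
  fun_prop

theorem measurable_jumpIntegrand (hHc : Continuous H) (huc : Continuous u) (e q : E) :
    Measurable (jumpIntegrand H u e q) := by
  have hshift : Measurable fun z : ℝ => u (q + z • e) :=
    Continuous.measurable (by fun_prop)
  exact measurable_id.mul
    (hHc.measurable.comp ((measurable_const.sub hshift).div measurable_id))

theorem isBigO_jumpIntegrand (hH : H =O[⊤] fun x => 1 + |x|) (hu : u =O[⊤] w)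
    (hw1 : ∀ q, 1 ≤ w q) (hwv : ∀ q y, w (q + y) ≤ v y * w q) (e : E) :
    (fun x : E × ℝ => jumpIntegrand H u e x.1 x.2) =O[⊤]
      fun x => w x.1 * (1 + |x.2| + v (x.2 • e)) := by
  have hw0 : ∀ q, 0 < w q := fun q => zero_lt_one.trans_le (hw1 q)
  have hv0 : ∀ y, 0 < v y := fun y =>
    pos_of_mul_pos_left ((hw0 _).trans_le (hwv 0 y)) (hw0 0).le
  set g : E × ℝ → ℝ := fun x => w x.1 * (1 + |x.2| + v (x.2 • e))
  have isBigO_g {f : E × ℝ → ℝ} (hf0 : ∀ x, 0 ≤ f x) (hfg : ∀ x, f x ≤ g x) : f =O[⊤] g :=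
    isBigO_of_le ⊤ fun x => by
      rw [Real.norm_of_nonneg (hf0 x)]
      exact (hfg x).trans (Real.le_norm_self _)
  have hz : (fun x : E × ℝ => |x.2|) =O[⊤] g := isBigO_g (fun _ => abs_nonneg _) fun x => by
    nlinarith [hw1 x.1, abs_nonneg x.2, hv0 (x.2 • e)]
  have hbase : (fun x : E × ℝ => w x.1) =O[⊤] g := isBigO_g (fun x => (hw0 x.1).le) fun x => by
    nlinarith [hw0 x.1, abs_nonneg x.2, hv0 (x.2 • e)]
  have hshift : (fun x : E × ℝ => w (x.1 + x.2 • e)) =O[⊤] g :=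
    isBigO_g (fun x => (hw0 _).le) fun x => by
      nlinarith [hw0 x.1, abs_nonneg x.2, hwv x.1 (x.2 • e)]
  have hincr : (fun x : E × ℝ => u x.1 - u (x.1 + x.2 • e)) =O[⊤] g :=
    ((hu.comp_tendsto (k := Prod.fst) tendsto_top).trans hbase).sub
      ((hu.comp_tendsto (k := fun x : E × ℝ => x.1 + x.2 • e) tendsto_top).trans hshift)
  exact ((isBigO_mul_comp_div hH).comp_tendsto
    (k := fun x : E × ℝ => (x.2, u x.1 - u (x.1 + x.2 • e))) tendsto_top).trans
      (hz.add hincr.abs_left)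

end JumpIntegral

section PolynomialWeight

open Asymptotics Topology

theorem isBigO_one_nhds_const_mul_one_add_norm_pow {E : Type*} [SeminormedAddCommGroup E]
    (C : ℝ) (p : ℕ) (y₀ : E) :
    (fun y : E => C * (1 + ‖y‖ ^ p)) =O[𝓝 y₀] (fun _ => 1 : E → ℝ) :=
  (Continuous.tendsto (by fun_prop) y₀).isBigO_one ℝ

theorem integrable_id_of_integrable_pow {μ : Measure ℝ} [IsFiniteMeasure μ] {p : ℕ} (hp : 1 ≤ p)
    (h : Integrable (fun z => z ^ p) μ) : Integrable (fun z => z) μ := by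
  have hnorm : Integrable (fun z : ℝ => ‖z‖ ^ 1) μ :=
    integrable_norm_pow_of_le (f := fun z => z) aestronglyMeasurable_id hp
      (by simpa only [norm_pow] using h.norm)
  simp only [pow_one] at hnorm
  exact (integrable_norm_iff aestronglyMeasurable_id).1 hnorm

theorem integrable_const_mul_one_add_norm_smul_pow {E : Type*} [SeminormedAddCommGroup E]
    [NormedSpace ℝ E] {μ : Measure ℝ} [IsFiniteMeasure μ] {p : ℕ}
    (h : Integrable (fun z => z ^ p) μ) (C : ℝ) (e : E) :
    Integrable (fun z : ℝ => C * (1 + ‖z • e‖ ^ p)) μ := by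
  simp only [norm_smul, mul_pow, ← norm_pow _ p]
  exact ((integrable_const 1).add (h.norm.mul_const _)).const_mul C

end PolynomialWeight

section WeightedSpace

open Asymptotics Topology

variable {d : ℕ} {π u : EuclideanSpace ℝ (Fin d) → ℝ}

theorem inCpi_iff_isBigO (hπ0 : ∀ q, 0 ≤ π q) :
    InCpi π u ↔ Continuous u ∧ u =O[⊤] fun q => 1 + π q := by
  have hnorm : ∀ q, ‖1 + π q‖ = 1 + π q := fun q =>
    Real.norm_of_nonneg (add_nonneg zero_le_one (hπ0 q))
  simp only [InCpi, isBigO_top, hnorm, Real.norm_eq_abs]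

theorem InCpi.sub {f g : EuclideanSpace ℝ (Fin d) → ℝ} (hf : InCpi π f) (hg : InCpi π g) :
    InCpi π fun q => f q - g q := by
  obtain ⟨hfc, M, hM⟩ := hf
  obtain ⟨hgc, N, hN⟩ := hg
  refine ⟨hfc.sub hgc, M + N, fun q => (abs_sub _ _).trans ?_⟩
  rw [add_mul]
  exact add_le_add (hM q) (hN q)

theorem InCpi.sum {ι : Type*} [Fintype ι] {f : ι → EuclideanSpace ℝ (Fin d) → ℝ}
    (hf : ∀ i, InCpi π (f i)) : InCpi π fun q => ∑ i, f i q := by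
  choose hc M hM using hf
  refine ⟨continuous_finsetSum _ fun i _ => hc i, ∑ i, M i, fun q => ?_⟩
  rw [Finset.sum_mul]
  exact (Finset.abs_sum_le_sum_abs _ _).trans (Finset.sum_le_sum fun i _ => hM i q)

theorem integrable_jumpIntegrand_and_inCpi_integral {H : ℝ → ℝ} (hHc : Continuous H)
    (hH : H =O[⊤] fun x => 1 + |x|) {μ : Measure ℝ} [IsFiniteMeasure μ]
    {v : EuclideanSpace ℝ (Fin d) → ℝ} (hπ0 : ∀ q, 0 ≤ π q)
    (hv : v =O[𝓝 0] (fun _ => 1 : EuclideanSpace ℝ (Fin d) → ℝ))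
    (hπv : ∀ q y, 1 + π (q + y) ≤ v y * (1 + π q)) (hμ : Integrable (fun z => z) μ)
    {e : EuclideanSpace ℝ (Fin d)} (hμv : Integrable (fun z : ℝ => v (z • e)) μ)
    (hu : InCpi π u) :
    (∀ q, Integrable (jumpIntegrand H u e q) μ) ∧
      InCpi π fun q => ∫ z, jumpIntegrand H u e q z ∂μ := by
  obtain ⟨huc, huO⟩ := (inCpi_iff_isBigO hπ0).1 hu
  let w : EuclideanSpace ℝ (Fin d) → ℝ := fun q => 1 + π q
  have hw1 : ∀ q, 1 ≤ w q := fun q => le_add_of_nonneg_right (hπ0 q)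
  have hdom := isBigO_jumpIntegrand (w := w) hH huO hw1 hπv e
  have hint : Integrable (fun z => 1 + |z| + v (z • e)) μ :=
    ((integrable_const 1).add hμ.abs).add hμv
  have hmeas := fun q => (measurable_jumpIntegrand hHc huc e q).aestronglyMeasurable (μ := μ)
  have hlocal := isBigO_one_nhds_of_moderate (w := w) (fun q => zero_le_one.trans (hw1 q)) hπv hv
  exact ⟨fun q => integrable_of_isBigO_mul hdom hint (hmeas q),
    (inCpi_iff_isBigO hπ0).2 ⟨continuous_integral_of_isBigO_mul hdom hint hlocal hmeas
      (continuous_jumpIntegrand hHc huc e), isBigO_integral_of_isBigO_mul hdom hint⟩⟩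

theorem Fop_maps_Cpi_to_Cpi_general (Hb Ha : Fin d → ℝ → ℝ)
    (hHbc : ∀ i, Continuous (Hb i)) (hHac : ∀ i, Continuous (Ha i))
    (hHb : ∀ i, Hb i =O[⊤] fun x => 1 + |x|) (hHa : ∀ i, Ha i =O[⊤] fun x => 1 + |x|)
    (μb μa : Fin d → Measure ℝ) [∀ i, IsFiniteMeasure (μb i)] [∀ i, IsFiniteMeasure (μa i)]
    (hπ0 : ∀ q, 0 ≤ π q) (v : EuclideanSpace ℝ (Fin d) → ℝ)
    (hv : v =O[𝓝 0] (fun _ => 1 : EuclideanSpace ℝ (Fin d) → ℝ))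
    (hπv : ∀ q y, 1 + π (q + y) ≤ v y * (1 + π q))
    (hμb : ∀ i, Integrable (fun z => z) (μb i)) (hμa : ∀ i, Integrable (fun z => z) (μa i))
    (hμbv : ∀ i, Integrable (fun z : ℝ => v (z • EuclideanSpace.single i (1 : ℝ))) (μb i))
    (hμav : ∀ i, Integrable (fun z : ℝ => v (z • -EuclideanSpace.single i (1 : ℝ))) (μa i))
    (ψ : EuclideanSpace ℝ (Fin d) → ℝ) (hψ : InCpi π ψ) (hu : InCpi π u) :
    (∀ (q : EuclideanSpace ℝ (Fin d)) (i : Fin d),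
      Integrable
        (fun z : ℝ => z * Hb i ((u q - u (q + z • EuclideanSpace.single i (1 : ℝ))) / z))
        (μb i) ∧
      Integrable
        (fun z : ℝ => z * Ha i ((u q - u (q - z • EuclideanSpace.single i (1 : ℝ))) / z))
        (μa i)) ∧
    InCpi π (Fop d ψ Hb Ha μb μa u) := by
  have hbid := fun i => integrable_jumpIntegrand_and_inCpi_integral (hHbc i) (hHb i) hπ0 hv hπv
    (hμb i) (hμbv i) hu
  have hask := fun i => integrable_jumpIntegrand_and_inCpi_integral (hHac i) (hHa i) hπ0 hv hπv
    (hμa i) (hμav i) hu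
  simp only [jumpIntegrand_neg] at hask
  exact ⟨fun q i => ⟨(hbid i).1 q, (hask i).1 q⟩,
    (hψ.sub (.sum fun i => (hbid i).2)).sub (.sum fun i => (hask i).2)⟩

end WeightedSpace

/-- For every `u ∈ C_π`, `F(u)` is well defined (the integrals converge), continuous,
and belongs to `C_π`. -/
theorem Fop_maps_Cpi_to_Cpi (d : ℕ) (hd : 1 ≤ d)
    (Hb Ha : Fin d → ℝ → ℝ) (Lb La : Fin d → NNReal)
    (hHb : ∀ i, LipschitzWith (Lb i) (Hb i)) (hHa : ∀ i, LipschitzWith (La i) (Ha i))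
    (μb μa : Fin d → Measure ℝ)
    [∀ i, IsProbabilityMeasure (μb i)] [∀ i, IsProbabilityMeasure (μa i)]
    (hμb0 : ∀ i, μb i (Set.Iic 0) = 0) (hμa0 : ∀ i, μa i (Set.Iic 0) = 0)
    (π : EuclideanSpace ℝ (Fin d) → ℝ) (hπc : Continuous π) (hπ0 : ∀ q, 0 ≤ π q)
    (p : ℕ) (hp : 1 ≤ p) (C : ℝ) (hC : 0 < C)
    (hπ1 : ∀ q, π q ≤ C * (1 + ‖q‖ ^ p))
    (hπ2 : ∀ q y : EuclideanSpace ℝ (Fin d),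
      (1 + π (q + y)) / (1 + π q) ≤ C * (1 + ‖y‖ ^ p))
    (hmomb : ∀ i, Integrable (fun z : ℝ => z ^ p) (μb i))
    (hmoma : ∀ i, Integrable (fun z : ℝ => z ^ p) (μa i))
    (ψ : EuclideanSpace ℝ (Fin d) → ℝ) (hψ : InCpi π ψ)
    (u : EuclideanSpace ℝ (Fin d) → ℝ) (hu : InCpi π u) :
    (∀ (q : EuclideanSpace ℝ (Fin d)) (i : Fin d),
      Integrable
        (fun z : ℝ => z * Hb i ((u q - u (q + z • EuclideanSpace.single i (1 : ℝ))) / z))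
        (μb i) ∧
      Integrable
        (fun z : ℝ => z * Ha i ((u q - u (q - z • EuclideanSpace.single i (1 : ℝ))) / z))
        (μa i)) ∧
    InCpi π (Fop d ψ Hb Ha μb μa u) :=
  Fop_maps_Cpi_to_Cpi_general Hb Ha (fun i => (hHb i).continuous) (fun i => (hHa i).continuous)
    (fun i => isBigO_one_add_abs_of_lipschitzWith (hHb i))
    (fun i => isBigO_one_add_abs_of_lipschitzWith (hHa i)) μb μa hπ0 _
    (isBigO_one_nhds_const_mul_one_add_norm_pow C p 0)
    (fun q y => (div_le_iff₀ (add_pos_of_pos_of_nonneg one_pos (hπ0 q))).1 (hπ2 q y))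
    (fun i => integrable_id_of_integrable_pow hp (hmomb i))
    (fun i => integrable_id_of_integrable_pow hp (hmoma i))
    (fun i => integrable_const_mul_one_add_norm_smul_pow (hmomb i) C _)
    (fun i => integrable_const_mul_one_add_norm_smul_pow (hmoma i) C _) ψ hψ hu
end
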